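/- Finiteness of clause projection sets: for every logic program P and every atom A, the clause projection set cproj(D) of the derivation tree D for P and A is a finite set. -/

import Mathlib

/-!
The first and third components of an element `(k, t, v)` of the clause projection set pin it inside
a set depending on `P` alone: `t` is the subterm at position `v` of the head of the `k`-th clause.
There are finitely many clauses, and a finitely branching finite tree has finitely many pairs
(position, subterm) (`finite_setOf_subtermAt`, by structural induction), so this set is finite.
-/

/- A formalization of the framework of Komendantskaya, Johann, Schmidt,
   "A Productivity Checker for Logic Programming". -/

namespace LPProd

/-- A first-order signature: finitely many function symbols (with arities)
    and finitely many predicate symbols (with arities). Variables are `ℕ`. -/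
structure Signature where
  Fn : Type
  fnFinite : Finite Fn
  fnArity : Fn → ℕ
  Pred : Type
  predFinite : Finite Pred
  predArity : Pred → ℕ

/-- Symbols occurring as node labels of term trees: variables, function
    symbols (constants are nullary function symbols), predicate symbols. -/
inductive Sym (S : Signature) : Type
  | var : ℕ → Sym S
  | fn : S.Fn → Sym S
  | pred : S.Pred → Sym S

/-- Finite trees labelled by symbols; terms and atoms are such trees. -/
inductive STree (S : Signature) : Type
  | node : Sym S → List (STree S) → STree S

variable (S : Signature)

/-- The root symbol `t(ε)` of a tree. -/
def STree.rootSym : STree S → Sym S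
  | .node l _ => l

/-- A node is a leaf if it has no children (variables and constants). -/
def STree.isLeaf : STree S → Prop
  | .node _ ts => ts = []

/-- `SubtermAt t w u`: `u` is the subterm of `t` at position `w ∈ ℕ*`. -/
inductive SubtermAt : STree S → List ℕ → STree S → Prop
  | refl (t : STree S) : SubtermAt t [] t
  | step {l : Sym S} {ts : List (STree S)} {i : ℕ} {t u : STree S} {w : List ℕ} :
      ts[i]? = some t → SubtermAt t w u → SubtermAt (.node l ts) (i :: w) u

/-- `t` is a term tree over the signature. -/
inductive IsTermTree : STree S → Prop
  | var (v : ℕ) : IsTermTree (.node (.var v) [])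
  | fn (f : S.Fn) (ts : List (STree S)) :
      (∀ t ∈ ts, IsTermTree t) → ts.length = S.fnArity f →
      IsTermTree (.node (.fn f) ts)

/-- `A` is an atom: a predicate symbol applied to terms. -/
def IsAtomTree (A : STree S) : Prop :=
  ∃ p ts, A = .node (.pred p) ts ∧ ts.length = S.predArity p ∧
    ∀ t ∈ ts, IsTermTree S t

/-- Substitutions map variables to trees. -/
abbrev Subst := ℕ → STree S

mutual
  /-- Applying a substitution to a tree. -/
  def STree.subst (σ : Subst S) : STree S → STree S
    | .node (.var v) _ => σ v
    | .node (.fn f) ts => .node (.fn f) (substList σ ts)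
    | .node (.pred p) ts => .node (.pred p) (substList σ ts)
  def substList (σ : Subst S) : List (STree S) → List (STree S)
    | [] => []
    | t :: ts => STree.subst σ t :: substList σ ts
end

/-- Composition of substitutions: `(ρ ∘ σ)(v) = ρ(σ(v))`. -/
def Subst.comp (ρ σ : Subst S) : Subst S := fun v => (σ v).subst S ρ

/-- `σ` is a matcher of `t` against `u`: `σ(t) = u`. -/
def IsMatcher (σ : Subst S) (t u : STree S) : Prop := t.subst S σ = u

/-- `σ` is a unifier of `t` and `u`: `σ(t) = σ(u)`. -/
def IsUnifier (σ : Subst S) (t u : STree S) : Prop := t.subst S σ = u.subst S σ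

/-- `σ` is a most general matcher (mgm) of `t` against `u`. -/
def IsMGM (σ : Subst S) (t u : STree S) : Prop :=
  IsMatcher S σ t u ∧ ∀ τ, IsMatcher S τ t u → ∃ ρ, τ = Subst.comp S ρ σ

/-- `σ` is a most general unifier (mgu) of `t` and `u`. -/
def IsMGU (σ : Subst S) (t u : STree S) : Prop :=
  IsUnifier S σ t u ∧ ∀ τ, IsUnifier S τ t u → ∃ ρ, τ = Subst.comp S ρ σ

/-- `ContainsSym t s`: the symbol `s` occurs somewhere in `t`. -/
def ContainsSym (t : STree S) (s : Sym S) : Prop :=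
  ∃ w u, SubtermAt S t w u ∧ u.rootSym = s

/-- `t₂` is a contraction of `t₁` (`t₁ ▷ t₂`) witnessed at position `w`:
    `t₂(w)` is a leaf, `t₁(w)` is not a leaf, and the branches to `w` in
    `t₁` and `t₂` are identical up to node `w`.  The reducing subterm is
    `subterm(t₁,w)`. -/
def ContractionAt (t₁ t₂ : STree S) (w : List ℕ) : Prop :=
  (∃ u₂, SubtermAt S t₂ w u₂ ∧ u₂.isLeaf) ∧
  (∃ u₁, SubtermAt S t₁ w u₁ ∧ ¬ u₁.isLeaf) ∧
  (∀ v, v <+: w → v ≠ w → ∀ u₁ u₂, SubtermAt S t₁ v u₁ → SubtermAt S t₂ v u₂ →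
      u₁.rootSym = u₂.rootSym)

/-- `t₁ ▷ t₂`: `t₂` is a contraction of `t₁`. -/
def Contraction (t₁ t₂ : STree S) : Prop := ∃ w, ContractionAt S t₁ t₂ w

/-- A recursive contraction at `w`: in addition, `subterm(t₁,w)` contains
    the symbol `t₂(w)`. -/
def RecContractionAt (t₁ t₂ : STree S) (w : List ℕ) : Prop :=
  ContractionAt S t₁ t₂ w ∧
  ∃ u₁ u₂, SubtermAt S t₁ w u₁ ∧ SubtermAt S t₂ w u₂ ∧ ContainsSym S u₁ u₂.rootSym

/-- A variable contraction at `w`: `t₂(w)` is a variable. -/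
def VarContractionAt (t₁ t₂ : STree S) (w : List ℕ) : Prop :=
  ContractionAt S t₁ t₂ w ∧
  ∃ u₂ n, SubtermAt S t₂ w u₂ ∧ u₂.rootSym = Sym.var n

/-- A Horn clause `A ← B₁,…,Bₙ`. -/
structure Clause (S : Signature) where
  head : STree S
  body : List (STree S)

/-- A logic program: a finite list of Horn clauses; `P[i]?` is `P(i)`. -/
abbrev Program := List (Clause S)

/-- A (possibly infinite) and-or rewriting tree, presented as a tree
    language of node positions together with labelling functions.
    And-nodes sit at even depth (labelled by atoms), or-nodes at odd depth
    (labelled by clause indices).  An and-node `w` has its or-node children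
    indexed by the clause numbers used, i.e. the child `w ++ [i]`
    corresponds to clause `P(i)`. -/
structure RTree (S : Signature) where
  dom : Set (List ℕ)
  andLabel : List ℕ → STree S
  orLabel : List ℕ → ℕ

/-- `T` is the rewriting tree for program `P` and atom `A`. -/
structure IsRewritingTree (P : Program S) (A : STree S) (T : RTree S) : Prop where
  root_mem : [] ∈ T.dom
  root_label : T.andLabel [] = A
  downward : ∀ w ∈ T.dom, ∀ v, v <+: w → v ∈ T.dom
  or_exists : ∀ w ∈ T.dom, w.length % 2 = 0 → ∀ i,
      ((w ++ [i]) ∈ T.dom ↔ ∃ c, P[i]? = some c ∧ ∃ θ, IsMGM S θ c.head (T.andLabel w))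
  or_label : ∀ w ∈ T.dom, w.length % 2 = 0 → ∀ i, (w ++ [i]) ∈ T.dom →
      T.orLabel (w ++ [i]) = i
  and_exists : ∀ w ∈ T.dom, w.length % 2 = 0 → ∀ i, (w ++ [i]) ∈ T.dom →
      ∀ c, P[i]? = some c → ∀ j, ((w ++ [i, j]) ∈ T.dom ↔ j < c.body.length)
  and_label : ∀ w ∈ T.dom, w.length % 2 = 0 → ∀ i, (w ++ [i]) ∈ T.dom →
      ∀ c, P[i]? = some c → ∀ θ, IsMGM S θ c.head (T.andLabel w) →
      ∀ j B, c.body[j]? = some B → T.andLabel (w ++ [i, j]) = B.subst S θ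

/-- `T` contains a loop at and-nodes `w` and `v`:  `w` properly precedes `v`
    on a branch, the atoms `T(w)` and `T(v)` have the same predicate, and the
    parent or-nodes of `T(w)` and `T(v)` are given by the same clause. -/
def HasLoopAt (T : RTree S) (w v : List ℕ) : Prop :=
  w ∈ T.dom ∧ v ∈ T.dom ∧ w <+: v ∧ w ≠ v ∧ w ≠ [] ∧
  w.length % 2 = 0 ∧ v.length % 2 = 0 ∧
  (T.andLabel w).rootSym = (T.andLabel v).rootSym ∧
  T.orLabel w.dropLast = T.orLabel v.dropLast

/-- The loop at `(w,v)` is guarded by `(P(k), t)`: the parent or-nodes of the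
    loop are given by clause `k` and `t` is a recursive reducing subterm for
    `T(w) ▷ T(v)`. -/
def LoopGuardedBy (T : RTree S) (w v : List ℕ) (k : ℕ) (t : STree S) : Prop :=
  HasLoopAt S T w v ∧ T.orLabel w.dropLast = k ∧
  ∃ p, RecContractionAt S (T.andLabel w) (T.andLabel v) p ∧
       SubtermAt S (T.andLabel w) p t

/-- `GC2(T)`: every loop of `T` is guarded. -/
def GC2 (T : RTree S) : Prop :=
  ∀ w v, HasLoopAt S T w v → ∃ k t, LoopGuardedBy S T w v k t

/-- `w` is a leaf and-node of `T`. -/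
def IsLeafAndNode (T : RTree S) (w : List ℕ) : Prop :=
  w ∈ T.dom ∧ w.length % 2 = 0 ∧ ∀ i, (w ++ [i]) ∉ T.dom

/-- The tree transition `T → T_u` induced by the mgu `σ` of clause `P(k)`
    and the atom at the leaf and-node `u` of `T`: `σ` is applied to every
    and-node of `T` and branches are extended according to the
    rewriting-tree construction (so `T'` is the rewriting tree for `σ(A)`). -/
def TreeTransitionVia (P : Program S) (T : RTree S) (u : List ℕ) (k : ℕ)
    (σ : Subst S) (T' : RTree S) : Prop :=
  IsLeafAndNode S T u ∧
  (∃ c, P[k]? = some c ∧ IsMGU S σ c.head (T.andLabel u)) ∧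
  IsRewritingTree S P ((T.andLabel []).subst S σ) T' ∧
  ∀ v ∈ T.dom, v ∈ T'.dom ∧
    (v.length % 2 = 0 → T'.andLabel v = (T.andLabel v).subst S σ) ∧
    (v.length % 2 = 1 → T'.orLabel v = T.orLabel v)

/-- A derivation tree: a tree whose nodes carry rewriting trees, where for
    each child node `n` we record the leaf position `tpos n`, the clause
    `tcls n` and the mgu `tmgu n` of the tree transition producing it. -/
structure DTree (S : Signature) where
  dom : Set (List ℕ)
  rt : List ℕ → RTree S
  tpos : List ℕ → List ℕ
  tcls : List ℕ → ℕ
  tmgu : List ℕ → Subst S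

/-- `D` is the derivation tree for `P` and `A`: its root is the rewriting
    tree for `P` and `A`, each child arises by a tree transition, and every
    possible tree transition is represented by a child. -/
structure IsDerivationTree (P : Program S) (A : STree S) (D : DTree S) : Prop where
  root_mem : [] ∈ D.dom
  root_rt : IsRewritingTree S P A (D.rt [])
  downward : ∀ w ∈ D.dom, ∀ v, v <+: w → v ∈ D.dom
  child_trans : ∀ w ∈ D.dom, ∀ i, (w ++ [i]) ∈ D.dom →
      TreeTransitionVia S P (D.rt w) (D.tpos (w ++ [i])) (D.tcls (w ++ [i]))
        (D.tmgu (w ++ [i])) (D.rt (w ++ [i]))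
  complete : ∀ w ∈ D.dom, ∀ u k σ T', TreeTransitionVia S P (D.rt w) u k σ T' →
      ∃ i, (w ++ [i]) ∈ D.dom ∧ D.tpos (w ++ [i]) = u ∧ D.tcls (w ++ [i]) = k

/-- `D` is guarded: `GC2` holds at every node. -/
def DTreeGuarded (D : DTree S) : Prop := ∀ w ∈ D.dom, GC2 S (D.rt w)

/-- The clause projection `π(T′)` of the node `n` of the derivation tree `D`
    (for the transition from its parent `w` to `n = w ++ [i]`, induced by the
    mgu `σ = tmgu n` of clause `P(k)`, `k = tcls n`, and the atom `B` at the
    leaf `tpos n`):  all triples `(k, t, v)` where `t` is the subterm of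
    `head(P(k))` at position `v`, `σ(B) ▷ B` holds with some variable
    reducing subterm `t′`, and `t′` matches against `t` (`t′ = σ′(t)`). -/
def clauseProj (P : Program S) (D : DTree S) (n : List ℕ) :
    Set (ℕ × STree S × List ℕ) :=
  { x | ∃ w i, n = w ++ [i] ∧ w ∈ D.dom ∧ n ∈ D.dom ∧
        x.1 = D.tcls n ∧
        (∃ c, P[x.1]? = some c ∧ SubtermAt S c.head x.2.2 x.2.1) ∧
        (∃ p t', VarContractionAt S
              (((D.rt w).andLabel (D.tpos n)).subst S (D.tmgu n))
              ((D.rt w).andLabel (D.tpos n)) p ∧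
            SubtermAt S (((D.rt w).andLabel (D.tpos n)).subst S (D.tmgu n)) p t' ∧
            ∃ σ', x.2.1.subst S σ' = t') }

/-- The coinductive invariant `ci(T′)` at node `n` of `D`: the subset of the
    clause projection consisting of those `(k, t, v)` such that the branch of
    the parent tree from its root to the leaf `tpos n` contains a loop
    guarded by `(P(k), t″)` with `t″ = θ(t)` for some `θ`. -/
def coInv (P : Program S) (D : DTree S) (n : List ℕ) :
    Set (ℕ × STree S × List ℕ) :=
  { x | x ∈ clauseProj S P D n ∧
        ∃ w i, n = w ++ [i] ∧ w ∈ D.dom ∧ n ∈ D.dom ∧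
        ∃ a b, a <+: D.tpos n ∧ b <+: D.tpos n ∧
          ∃ t'' θ, x.2.1.subst S θ = t'' ∧
            LoopGuardedBy S (D.rt w) a b x.1 t'' }

/-- The clause projection set `cproj(D)`. -/
def cproj (P : Program S) (D : DTree S) : Set (ℕ × STree S × List ℕ) :=
  ⋃ n ∈ D.dom, clauseProj S P D n

/-- The coinductive invariant set `cinv(D)`. -/
def cinv (P : Program S) (D : DTree S) : Set (ℕ × STree S × List ℕ) :=
  ⋃ n ∈ D.dom, coInv S P D n

/-- The guarded transition `D(v) ⟹ D(w)`: `v` properly precedes `w` on a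
    branch of `D` and `ci(D(v)) = ci(D(w)) ≠ ∅`. -/
def GuardedTransition (P : Program S) (D : DTree S) (v w : List ℕ) : Prop :=
  v ∈ D.dom ∧ w ∈ D.dom ∧ v <+: w ∧ v ≠ w ∧
  coInv S P D v = coInv S P D w ∧ coInv S P D v ≠ ∅

/-- `domO` is (the set of nodes of) the observation subtree of the derivation
    tree `D`: it has the same root, and the children in `D` of a node `w` of
    the subtree are kept unless the branch is truncated at `w` because the
    rewriting tree `D(w)` is unguarded or a guarded transition `D(v) ⟹ D(w)`
    has been reached; in either case `w` is a leaf of the subtree. -/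
structure IsObservationSubtree (P : Program S) (D : DTree S)
    (domO : Set (List ℕ)) : Prop where
  root_mem : [] ∈ domO
  sub : domO ⊆ D.dom
  downward : ∀ w ∈ domO, ∀ v, v <+: w → v ∈ domO
  children : ∀ w ∈ domO, ∀ i, (w ++ [i]) ∈ D.dom →
      ((w ++ [i]) ∈ domO ↔
        (GC2 S (D.rt w) ∧ ¬ ∃ v, GuardedTransition S P D v w))

/-- The observation subtree is guarded if all its rewriting trees satisfy
    `GC2` (otherwise a branch was truncated by an unguarded tree and it is
    unguarded). -/
def ObsGuarded (P : Program S) (D : DTree S) (domO : Set (List ℕ)) : Prop :=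
  ∀ w ∈ domO, GC2 S (D.rt w)

/-- The clause `P(i)` is guarded: the observation subtree of the derivation
    tree for `P` and `head(P(i))` is guarded. -/
def ClauseGuarded (P : Program S) (i : ℕ) : Prop :=
  ∀ c, P[i]? = some c → ∀ D domO, IsDerivationTree S P c.head D →
    IsObservationSubtree S P D domO → ObsGuarded S P D domO

/-- `GC3(P)`: every clause of `P` is guarded. -/
def GC3 (P : Program S) : Prop := ∀ i, i < P.length → ClauseGuarded S P i

/-- `P` is universally observable: for every atom `A` the rewriting tree
    for `P` and `A` is finite. -/
def UniversallyObservable (P : Program S) : Prop :=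
  ∀ A T, IsAtomTree S A → IsRewritingTree S P A T → T.dom.Finite

/-- The node at depth `n` of the infinite branch determined by the choice
    function `g`. -/
def branchNode (g : ℕ → ℕ) (n : ℕ) : List ℕ := List.ofFn (fun i : Fin n => g i)

/-- A tree language has an infinite branch. -/
def HasInfiniteBranch (dom : Set (List ℕ)) : Prop :=
  ∃ g : ℕ → ℕ, ∀ n, branchNode g n ∈ dom

/-- `P` is existentially live: some S-resolution derivation for `P` and some
    atom `A` is live, i.e. constitutes an infinite branch of the derivation
    tree for `P` and `A`. -/
def ExistentiallyLive (P : Program S) : Prop :=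
  ∃ A D, IsAtomTree S A ∧ IsDerivationTree S P A D ∧ HasInfiniteBranch D.dom

/-- `P` is observationally productive: universally observable and
    existentially live. -/
def ObservationallyProductive (P : Program S) : Prop :=
  UniversallyObservable S P ∧ ExistentiallyLive S P

/-- A tree has finitely many pairs (subterm, position). The recursor of the nested inductive type
is used with the auxiliary claim that every tree of a list of children has the property. -/
theorem finite_setOf_subtermAt (S : Signature) (T : STree S) :
    {x : STree S × List ℕ | SubtermAt S T x.2 x.1}.Finite := by
  refine STree.rec (motive_1 := fun T => {x : STree S × List ℕ | SubtermAt S T x.2 x.1}.Finite)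
    (motive_2 := fun ts => ∀ t ∈ ts, {x : STree S × List ℕ | SubtermAt S t x.2 x.1}.Finite)
    ?_ ?_ ?_ T
  · intro l ts ih
    have hfin : (⋃ i : Fin ts.length, (fun x : STree S × List ℕ => (x.1, i.1 :: x.2)) ''
        {x | SubtermAt S ts[i] x.2 x.1}).Finite :=
      Set.finite_iUnion fun i => (ih _ (List.getElem_mem i.2)).image _
    refine (hfin.insert (STree.node l ts, [])).subset ?_
    rintro ⟨u, w⟩ h
    cases h with
    | refl => exact Set.mem_insert _ _
    | @step _ _ i t _ w hi h =>
      obtain ⟨hlt, rfl⟩ := List.getElem?_eq_some_iff.mp hi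
      exact Set.mem_insert_of_mem _ (Set.mem_iUnion.mpr ⟨⟨i, hlt⟩, (u, w), h, rfl⟩)
  · simp
  · intro t ts ht hts
    exact List.forall_mem_cons.mpr ⟨ht, hts⟩

/-- Proposition: finiteness of clause projection sets.
For every logic program `P` and every atom `A`, the clause projection set
`cproj(D)` of the derivation tree `D` for `P` and `A` is a finite set. -/
theorem cproj_finite (S : Signature) (P : Program S) (A : STree S) (D : DTree S)
    (hA : IsAtomTree S A) (hD : IsDerivationTree S P A D) :
    (cproj S P D).Finite := by
  have hfin : (⋃ k : Fin P.length, (fun x : STree S × List ℕ => (k.1, x)) ''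
      {x | SubtermAt S P[k].head x.2 x.1}).Finite :=
    Set.finite_iUnion fun k => (finite_setOf_subtermAt S P[k].head).image _
  refine hfin.subset ?_
  rintro ⟨k, x⟩ hx
  obtain ⟨n, -, _, _, -, -, -, -, ⟨c, hc, hs⟩, -⟩ := Set.mem_iUnion₂.mp hx
  obtain ⟨hlt, rfl⟩ := List.getElem?_eq_some_iff.mp hc
  exact Set.mem_iUnion.mpr ⟨⟨k, hlt⟩, x, hs, rfl⟩

end LPProd
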